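/- (Many-anyon Hardy inequality, abelian magnetic gauge.) Let N ≥ 2, α ∈ ℝ, and define the fractionality α_N := min over p ∈ {0, 1, …, N−2} of min over q ∈ ℤ of |(2p+1)α − 2q|. Then for every smooth function Φ : (ℝ²)^N → ℂ, compactly supported away from the fat diagonal △ and symmetric under permutations of the N coordinates, one has ∫_{(ℝ²)^N} ∑_{j=1}^N ‖(−i∇_j + A_j^α(x)) Φ(x)‖² dx ≥ (4 α_N² / N) ∑_{1 ≤ j < k ≤ N} ∫_{(ℝ²)^N} |Φ(x)|² / |x_j − x_k|² dx. -/

import Mathlib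

open MeasureTheory

noncomputable section

/-- Rotation of a planar vector by 90 degrees: `(v₁, v₂)^⊥ = (−v₂, v₁)`. -/
def perp2 (v : Fin 2 → ℝ) : Fin 2 → ℝ := ![-(v 1), v 0]

/-- The squared Euclidean norm of a planar vector. -/
def normSq2 (v : Fin 2 → ℝ) : ℝ := v 0 ^ 2 + v 1 ^ 2

/-- The `p`-th component of the Aharonov–Bohm-type magnetic potential felt by particle `j`:
`A_j^α(x) = α ∑_{k≠j} (x_j − x_k)^⊥ / |x_j − x_k|²`. -/
def abPotential (N : ℕ) (α : ℝ) (j : Fin N) (p : Fin 2)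
    (x : Fin N → Fin 2 → ℝ) : ℝ :=
  α * ∑ k ∈ Finset.univ.erase j, perp2 (x j - x k) p / normSq2 (x j - x k)

/-- The fat diagonal in `(ℝ²)^N`. -/
def fatDiagonal (N : ℕ) : Set (Fin N → Fin 2 → ℝ) :=
  {x | ∃ j k, j ≠ k ∧ x j = x k}

/-- The fractionality `α_N = min_{p ∈ {0,…,N−2}} min_{q ∈ ℤ} |(2p+1)α − 2q|`. -/
def fractionality (N : ℕ) (α : ℝ) : ℝ :=
  sInf {t : ℝ | ∃ p : ℕ, p ≤ N - 2 ∧ ∃ q : ℤ, t = |(2 * (p : ℝ) + 1) * α - 2 * q|}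


lemma circle_fourier (w w' : ℝ → ℂ) (hw : ∀ t, HasDerivAt w (w' t) t) (hw' : Continuous w')
    (hper : w Real.pi = w 0) (c m : ℝ) (hm : 0 ≤ m) (hmq : ∀ q : ℤ, m ≤ |c + 2 * q|) :
    m ^ 2 * ∫ t in (0:ℝ)..Real.pi, ‖w t‖ ^ 2 ≤
      ∫ t in (0:ℝ)..Real.pi, ‖w' t + Complex.I * c * w t‖ ^ 2 := by
  have hπ : (0:ℝ) < Real.pi := Real.pi_pos
  have hwc : Continuous w := continuous_iff_continuousAt.2 fun t => (hw t).continuousAt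
  have memLp : ∀ f : ℝ → ℂ, Continuous f → MemLp f 2 (volume.restrict (Set.Ioc 0 Real.pi)) := by
    intro f hf
    obtain ⟨C, hC⟩ := isCompact_Icc.exists_bound_of_continuousOn
      (hf.continuousOn (s := Set.Icc (0:ℝ) Real.pi))
    refine MemLp.of_bound hf.aestronglyMeasurable C ?_
    filter_upwards [ae_restrict_mem measurableSet_Ioc] with t ht
    exact hC t (Set.Ioc_subset_Icc_self ht)
  set h : ℝ → ℂ := fun t => w' t + Complex.I * c * w t with hh
  have hhc : Continuous h := by fun_prop
  have P1 := hasSum_sq_fourierCoeffOn hπ (memLp w hwc)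
  have P2 := hasSum_sq_fourierCoeffOn hπ (memLp h hhc)
  have coefw' : ∀ n : ℤ, fourierCoeffOn hπ w' n = 2 * Complex.I * n * fourierCoeffOn hπ w n := by
    intro n
    by_cases hn : n = 0
    · subst hn
      rw [fourierCoeffOn_eq_integral]
      simp only [neg_zero, fourier_zero, one_smul]
      rw [intervalIntegral.integral_eq_sub_of_hasDerivAt (fun x _ => hw x)
        (hw'.intervalIntegrable _ _), hper]
      simp
    · rw [fourierCoeffOn_of_hasDerivAt hπ hn (fun x _ => hw x) (hw'.intervalIntegrable _ _), hper]
      have : (Real.pi : ℂ) ≠ 0 := by exact_mod_cast hπ.ne'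
      have hn' : (n : ℂ) ≠ 0 := by exact_mod_cast hn
      field_simp
      simp
  have coefh : ∀ n : ℤ, fourierCoeffOn hπ h n = Complex.I * ((c + 2 * n : ℝ) : ℂ) * fourierCoeffOn hπ w n := by
    intro n
    have : fourierCoeffOn hπ h n = fourierCoeffOn hπ w' n +
        fourierCoeffOn hπ (fun t => (Complex.I * c) * w t) n := by
      simp only [fourierCoeffOn_eq_integral]
      rw [← smul_add, ← intervalIntegral.integral_add]
      · simp [hh, mul_add]
      · apply Continuous.intervalIntegrable
        have : Continuous fun x : ℝ => fourier (-n) (x : AddCircle (Real.pi - 0)) :=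
          (map_continuous _).comp (AddCircle.continuous_mk' _)
        fun_prop
      · apply Continuous.intervalIntegrable
        have : Continuous fun x : ℝ => fourier (-n) (x : AddCircle (Real.pi - 0)) :=
          (map_continuous _).comp (AddCircle.continuous_mk' _)
        fun_prop
    rw [this, fourierCoeffOn.const_mul, coefw']
    push_cast
    ring
  have key := hasSum_le (f := fun i => m ^ 2 * ‖fourierCoeffOn hπ w i‖ ^ 2) (fun n => ?_)
    (P1.mul_left (m ^ 2)) P2
  · simp only [sub_zero, smul_eq_mul] at key
    have h2 := mul_le_mul_of_nonneg_left key hπ.le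
    field_simp at h2
    exact h2
  · rw [coefh, norm_mul, norm_mul, mul_pow, Complex.norm_I, one_mul, Complex.norm_real,
      Real.norm_eq_abs]
    have := hmq n
    gcongr

lemma circle_hardy (u u' : ℝ → ℂ) (a : ℝ → ℝ) (hu : ∀ t, HasDerivAt u (u' t) t)
    (hu' : Continuous u') (ha : Continuous a)
    (hper : u Real.pi = u 0) (c m : ℝ) (hm : 0 ≤ m) (hmq : ∀ q : ℤ, m ≤ |c + 2 * q|)
    (hc : ∫ t in (0:ℝ)..Real.pi, a t = Real.pi * c) :
    m ^ 2 * ∫ t in (0:ℝ)..Real.pi, ‖u t‖ ^ 2 ≤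
      ∫ t in (0:ℝ)..Real.pi, ‖-Complex.I * u' t + a t * u t‖ ^ 2 := by
  set G : ℝ → ℝ := fun t => (∫ s in (0:ℝ)..t, a s) - c * t with hG
  have hGd : ∀ t, HasDerivAt G (a t - c) t := fun t => by
    have h1 := (ha.integral_hasStrictDerivAt 0 t).hasDerivAt
    have h2 := (hasDerivAt_id t).const_mul c
    simpa using HasDerivAt.fun_sub h1 h2
  have hGc : Continuous G := continuous_iff_continuousAt.2 fun t => (hGd t).continuousAt
  have huc : Continuous u := continuous_iff_continuousAt.2 fun t => (hu t).continuousAt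
  set E : ℝ → ℂ := fun t => Complex.exp (G t * Complex.I) with hE
  have hEd : ∀ t, HasDerivAt E (E t * ((a t - c : ℝ) * Complex.I)) t := fun t =>
    ((hGd t).ofReal_comp.mul_const Complex.I).cexp
  have hEn : ∀ t, ‖E t‖ = 1 := fun t => Complex.norm_exp_ofReal_mul_I _
  have hEc : Continuous E := by fun_prop
  have := circle_fourier (fun t => E t * u t)
    (fun t => E t * ((a t - c : ℝ) * Complex.I) * u t + E t * u' t)
    (fun t => (hEd t).mul (hu t)) (by fun_prop) ?_ c m hm hmq
  · convert this using 2
    · simp [hEn]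
    · ext t
      rw [show E t * (((a t - c : ℝ) : ℂ) * Complex.I) * u t + E t * u' t + Complex.I * c * (E t * u t)
        = E t * (Complex.I * (-Complex.I * u' t + a t * u t)) by
          push_cast
          linear_combination (E t * u' t) * Complex.I_mul_I]
      simp only [norm_mul, hEn, Complex.norm_I, one_mul]
  · simp only [hE, hG, hc, hper]
    simp [mul_comm]

lemma winding (s : ℝ) (hs : 0 < s) (y : ℂ) (hy : ‖y‖ ≠ s) :
    ∫ t in (0:ℝ)..2 * Real.pi, circleMap 0 s t / (circleMap 0 s t - y)
      = if ‖y‖ < s then 2 * (Real.pi : ℂ) else 0 := by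
  have h : (∮ z in C(0, s), (z - y)⁻¹) =
      Complex.I * ∫ t in (0:ℝ)..2 * Real.pi, circleMap 0 s t / (circleMap 0 s t - y) := by
    rw [circleIntegral, ← intervalIntegral.integral_const_mul]
    congr 1
    ext t
    simp [deriv_circleMap, div_eq_mul_inv]
    ring
  have h2 : (∮ z in C(0, s), (z - y)⁻¹) = Complex.I * if ‖y‖ < s then 2 * (Real.pi : ℂ) else 0 := by
    split_ifs with hlt
    · rw [circleIntegral.integral_sub_inv_of_mem_ball (by simpa using hlt)]; ring
    · have hne : ∀ z ∈ Metric.closedBall (0:ℂ) s, z - y ≠ 0 := by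
        intro z hz h0
        rw [sub_eq_zero] at h0
        subst h0
        simp at hz
        exact hy (le_antisymm hz (not_lt.1 hlt))
      rw [mul_zero]
      apply Complex.circleIntegral_eq_zero_of_differentiable_on_off_countable hs.le
        Set.countable_empty
      · exact ContinuousOn.inv₀ (by fun_prop) hne
      · intro z hz
        exact DifferentiableAt.inv (by fun_prop) (hne z (Metric.ball_subset_closedBall hz.1))
  rw [h] at h2
  exact mul_left_cancel₀ Complex.I_ne_zero h2

/-- the half-circle winding number for a pair of antipodal points. -/
lemma winding_half (r y : ℂ) (hr : r ≠ 0) (hy : ‖y‖ ≠ ‖r‖) :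
    ∫ t in (0:ℝ)..Real.pi, ((r * Complex.exp (t * Complex.I)) / (r * Complex.exp (t * Complex.I) - y)
        + (r * Complex.exp (t * Complex.I)) / (r * Complex.exp (t * Complex.I) + y)).re
      = if ‖y‖ < ‖r‖ then 2 * Real.pi else 0 := by
  set f : ℝ → ℂ := fun t => circleMap 0 (‖r‖ ^ 2) t / (circleMap 0 (‖r‖ ^ 2) t - y ^ 2) with hf
  have hr0 : 0 < ‖r‖ := norm_pos_iff.2 hr
  have hne1 : ∀ t : ℝ, r * Complex.exp (t * Complex.I) - y ≠ 0 := by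
    intro t h0
    apply hy
    rw [← sub_eq_zero.1 h0, norm_mul, Complex.norm_exp_ofReal_mul_I, mul_one]
  have hne2 : ∀ t : ℝ, r * Complex.exp (t * Complex.I) + y ≠ 0 := by
    intro t h0
    apply hy
    rw [← norm_neg y, ← eq_neg_of_add_eq_zero_left h0, norm_mul, Complex.norm_exp_ofReal_mul_I,
      mul_one]
  have hsq : ∀ t : ℝ, (r * Complex.exp (t * Complex.I)) ^ 2
      = circleMap 0 (‖r‖ ^ 2) (2 * t + 2 * r.arg) := by
    intro t
    conv_lhs => rw [← Complex.norm_mul_exp_arg_mul_I r]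
    rw [circleMap, mul_pow, mul_pow, ← Complex.exp_nat_mul, ← Complex.exp_nat_mul, mul_assoc,
      ← Complex.exp_add]
    push_cast
    rw [zero_add]
    congr 2
    ring
  have hfc : Continuous f := by
    apply Continuous.div (by fun_prop) (by fun_prop)
    intro t h0
    apply hy
    have h3 := congrArg norm (sub_eq_zero.1 h0)
    rw [norm_circleMap_zero, norm_pow, abs_of_nonneg (by positivity)] at h3
    exact ((pow_left_inj₀ (norm_nonneg _) (norm_nonneg _) two_ne_zero).1 h3).symm
  have hpt : ∀ t : ℝ, ((r * Complex.exp (t * Complex.I)) / (r * Complex.exp (t * Complex.I) - y)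
        + (r * Complex.exp (t * Complex.I)) / (r * Complex.exp (t * Complex.I) + y)).re =
        2 * (f (2 * t + 2 * r.arg)).re := by
    intro t
    have h1 := hne1 t
    have h2 := hne2 t
    have : (2:ℝ) * (f (2 * t + 2 * r.arg)).re = (2 * f (2 * t + 2 * r.arg)).re := by simp
    rw [this]
    congr 1
    simp only [hf]
    rw [← hsq]
    have h3 : (r * Complex.exp (t * Complex.I)) ^ 2 - y ^ 2 ≠ 0 := by
      rw [sq_sub_sq]; exact mul_ne_zero h2 h1
    generalize r * Complex.exp (t * Complex.I) = z at h1 h2 h3 ⊢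
    rw [← sub_eq_zero]
    field_simp
    ring
  simp_rw [hpt]
  have hper : Function.Periodic (fun t => (f t).re) (2 * Real.pi) := by
    intro t
    simp only [hf, periodic_circleMap 0 (‖r‖ ^ 2) t]
  rw [intervalIntegral.integral_const_mul,
    intervalIntegral.integral_comp_mul_add (fun t => (f t).re) two_ne_zero]
  rw [show 2 * Real.pi + 2 * r.arg = (2 * 0 + 2 * r.arg) + 2 * Real.pi by ring,
    hper.intervalIntegral_add_eq _ 0]
  have h5 : ∫ t in (0:ℝ)..(0 + 2 * Real.pi), (f t).re = (∫ t in (0:ℝ)..(2 * Real.pi), f t).re := by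
    rw [zero_add]
    have := Complex.reCLM.intervalIntegral_comp_comm (hfc.intervalIntegrable (μ := volume) 0 (2 * Real.pi))
    simpa using this
  rw [h5, hf, winding _ (by positivity)]
  · have : ‖y ^ 2‖ < ‖r‖ ^ 2 ↔ ‖y‖ < ‖r‖ := by
      rw [norm_pow]; exact pow_lt_pow_iff_left₀ (norm_nonneg _) (norm_nonneg _) two_ne_zero
    simp only [this]
    split_ifs <;> simp
  · rw [norm_pow]
    intro h; exact hy ((pow_left_inj₀ (norm_nonneg _) (norm_nonneg _) two_ne_zero).1 h)

abbrev Conf (N : ℕ) := Fin N → Fin 2 → ℝ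

/-- half the relative coordinate -/
def relv {N : ℕ} (j k : Fin N) (x : Conf N) : Fin 2 → ℝ := (1 / 2 : ℝ) • (x j - x k)

/-- planar rotation -/
def rot2 (t : ℝ) (v : Fin 2 → ℝ) : Fin 2 → ℝ :=
  ![Real.cos t * v 0 - Real.sin t * v 1, Real.sin t * v 0 + Real.cos t * v 1]

/-- rotation of the relative coordinate of the pair `j, k`. -/
def pairRot {N : ℕ} (j k : Fin N) (t : ℝ) (x : Conf N) : Conf N :=
  x + (Pi.single j (rot2 t (relv j k x) - relv j k x)
    - Pi.single k (rot2 t (relv j k x) - relv j k x))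

lemma pairRot_j {N : ℕ} {j k : Fin N} (h : j ≠ k) (t : ℝ) (x : Conf N) :
    pairRot j k t x j = (1 / 2 : ℝ) • (x j + x k) + rot2 t (relv j k x) := by
  ext p
  simp [pairRot, h, relv]
  ring

lemma pairRot_k {N : ℕ} {j k : Fin N} (h : j ≠ k) (t : ℝ) (x : Conf N) :
    pairRot j k t x k = (1 / 2 : ℝ) • (x j + x k) - rot2 t (relv j k x) := by
  ext p
  simp [pairRot, h.symm, relv]
  ring

lemma pairRot_l {N : ℕ} {j k l : Fin N} (h : l ≠ j) (h' : l ≠ k) (t : ℝ) (x : Conf N) :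
    pairRot j k t x l = x l := by
  ext p
  simp [pairRot, h, h']

lemma relv_pairRot {N : ℕ} {j k : Fin N} (h : j ≠ k) (t : ℝ) (x : Conf N) :
    relv j k (pairRot j k t x) = rot2 t (relv j k x) := by
  rw [relv, pairRot_j h, pairRot_k h]
  ext p
  simp
  ring

lemma sub_pairRot {N : ℕ} {j k : Fin N} (h : j ≠ k) (t : ℝ) (x : Conf N) :
    pairRot j k t x j - pairRot j k t x k = (2 : ℝ) • rot2 t (relv j k x) := by
  rw [pairRot_j h, pairRot_k h]
  ext p
  simp
  ring

lemma normSq2_rot2 (t : ℝ) (v : Fin 2 → ℝ) : normSq2 (rot2 t v) = normSq2 v := by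
  simp only [normSq2, rot2, Matrix.cons_val_zero, Matrix.cons_val_one]
  linear_combination (v 0 ^ 2 + v 1 ^ 2) * Real.sin_sq_add_cos_sq t

lemma normSq2_perp2 (v : Fin 2 → ℝ) : normSq2 (perp2 v) = normSq2 v := by
  simp only [normSq2, perp2, Matrix.cons_val_zero, Matrix.cons_val_one]
  ring

lemma normSq2_smul (c : ℝ) (v : Fin 2 → ℝ) : normSq2 (c • v) = c ^ 2 * normSq2 v := by
  simp only [normSq2, Pi.smul_apply, smul_eq_mul]
  ring

lemma normSq2_pos {v : Fin 2 → ℝ} (h : v ≠ 0) : 0 < normSq2 v := by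
  have : v 0 ≠ 0 ∨ v 1 ≠ 0 := by
    by_contra! hc
    apply h
    ext p
    fin_cases p <;> simp [hc]
  rw [normSq2]
  rcases this with h | h <;> positivity

lemma continuous_pairRot {N : ℕ} (j k : Fin N) :
    Continuous fun q : Conf N × ℝ => pairRot j k q.2 q.1 := by
  have h1 : Continuous fun q : Conf N × ℝ => rot2 q.2 (relv j k q.1) - relv j k q.1 := by
    refine continuous_pi fun p => ?_
    fin_cases p <;> simp [rot2, relv] <;> fun_prop
  have h2 : ∀ i : Fin N, Continuous fun q : Conf N × ℝ =>
      (Pi.single i (rot2 q.2 (relv j k q.1) - relv j k q.1) : Conf N) := fun i =>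
    (continuous_single (A := fun _ : Fin N => Fin 2 → ℝ) i).comp h1
  unfold pairRot
  exact continuous_fst.add ((h2 j).sub (h2 k))

lemma hasDerivAt_pairRot {N : ℕ} (j k : Fin N) (x : Conf N) (t : ℝ) :
    HasDerivAt (fun t => pairRot j k t x)
      (Pi.single j (perp2 (rot2 t (relv j k x))) - Pi.single k (perp2 (rot2 t (relv j k x)))) t := by
  set r := relv j k x
  have h1 : HasDerivAt (fun t => rot2 t r - r) (perp2 (rot2 t r)) t := by
    apply HasDerivAt.sub_const
    rw [hasDerivAt_pi]
    intro p
    have hc := Real.hasDerivAt_cos t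
    have hs := Real.hasDerivAt_sin t
    fin_cases p
    · have := HasDerivAt.fun_sub (hc.mul_const (r 0)) (hs.mul_const (r 1))
      simp [rot2, perp2]
      convert this using 1
      ring
    · have := HasDerivAt.fun_add (hs.mul_const (r 0)) (hc.mul_const (r 1))
      simp [rot2, perp2]
      convert this using 1
      ring
  have h2 : ∀ i : Fin N, HasDerivAt (fun t => (Pi.single i (rot2 t r - r) : Conf N))
      (Pi.single i (perp2 (rot2 t r))) t := by
    intro i
    exact (ContinuousLinearMap.single ℝ (fun _ : Fin N => Fin 2 → ℝ) i).hasFDerivAt.comp_hasDerivAt t h1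
  unfold pairRot
  exact ((h2 j).sub (h2 k)).const_add x

lemma pairRot_pi {N : ℕ} {j k : Fin N} (h : j ≠ k) (x : Conf N) :
    pairRot j k Real.pi x = x ∘ Equiv.swap j k := by
  have hr : rot2 Real.pi (relv j k x) = - relv j k x := by
    ext p
    fin_cases p <;> simp [rot2]
  ext l p
  by_cases hj : l = j
  · subst hj
    rw [pairRot_j h, hr]
    simp [relv]
    ring
  · by_cases hk : l = k
    · subst hk
      rw [pairRot_k h, hr]
      simp [relv]
      ring
    · rw [pairRot_l hj hk]
      simp [Equiv.swap_apply_of_ne_of_ne hj hk]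

lemma pairRot_zero {N : ℕ} (j k : Fin N) (x : Conf N) :
    pairRot j k 0 x = x := by
  have hr : rot2 0 (relv j k x) = relv j k x := by
    ext p
    fin_cases p <;> simp [rot2]
  simp [pairRot, hr]

lemma pairRot_neg {N : ℕ} {j k : Fin N} (h : j ≠ k) (t : ℝ) (x : Conf N) :
    pairRot j k (-t) (pairRot j k t x) = x := by
  have hr : rot2 (-t) (rot2 t (relv j k x)) = relv j k x := by
    ext p
    fin_cases p
    · simp [rot2]
      linear_combination (relv j k x 0) * Real.sin_sq_add_cos_sq t
    · simp [rot2]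
      linear_combination (relv j k x 1) * Real.sin_sq_add_cos_sq t
  rw [pairRot, relv_pairRot h, hr, pairRot]
  simp only [Pi.single_sub]
  abel

/-- `pairRot` as a linear map -/
def pairRotL {N : ℕ} (j k : Fin N) (t : ℝ) : Conf N →ₗ[ℝ] Conf N where
  toFun := pairRot j k t
  map_add' x y := by
    ext l p
    fin_cases p <;> simp [pairRot, rot2, relv, Pi.single_apply] <;> split_ifs <;> simp [Matrix.vecHead, Matrix.vecTail] <;> ring
  map_smul' c x := by
    ext l p
    fin_cases p <;> simp [pairRot, rot2, relv, Pi.single_apply] <;> split_ifs <;> simp [Matrix.vecHead, Matrix.vecTail] <;> ring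

/-- reflection -/
def reflL (N : ℕ) : Conf N →ₗ[ℝ] Conf N where
  toFun x l := ![x l 0, - x l 1]
  map_add' x y := by
    ext l p
    fin_cases p <;> simp; ring
  map_smul' c x := by
    ext l p
    fin_cases p <;> simp

lemma abs_det_pairRotL {N : ℕ} {j k : Fin N} (h : j ≠ k) (t : ℝ) :
    |LinearMap.det (pairRotL j k t)| = 1 := by
  have h1 : pairRotL j k (-t) * pairRotL j k t = 1 := by
    apply LinearMap.ext
    intro x
    exact pairRot_neg h t x
  have h2 : reflL N * reflL N = 1 := by
    apply LinearMap.ext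
    intro x
    change reflL N (reflL N x) = x
    ext l p
    fin_cases p <;> simp [reflL]
  have h3 : pairRotL j k (-t) = reflL N * pairRotL j k t * reflL N := by
    apply LinearMap.ext
    intro x
    change pairRot j k (-t) x = reflL N (pairRot j k t (reflL N x))
    ext l p
    fin_cases p <;> simp [reflL, pairRot, rot2, relv, Pi.single_apply] <;> split_ifs <;> simp [Matrix.vecHead, Matrix.vecTail] <;> ring
  have h4 := congrArg LinearMap.det h1
  have h5 := congrArg LinearMap.det h2
  rw [h3] at h4
  simp only [map_mul, map_one] at h4 h5
  have h6 : LinearMap.det (pairRotL j k t) ^ 2 = 1 := by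
    linear_combination h4 - (LinearMap.det (pairRotL j k t)) ^ 2 * h5
  rw [← sq_eq_sq₀ (abs_nonneg _) zero_le_one, sq_abs, h6, one_pow]

lemma measurePreserving_pairRot {N : ℕ} {j k : Fin N} (h : j ≠ k) (t : ℝ) :
    MeasurePreserving (pairRot j k t) (volume : Measure (Conf N)) volume := by
  have hd := abs_det_pairRotL h t
  refine ⟨?_, ?_⟩
  · have : Continuous (pairRot j k t) :=
      (continuous_pairRot j k).comp (Continuous.prodMk_left t)
    exact this.measurable
  · have h0 : LinearMap.det (pairRotL j k t) ≠ 0 := by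
      intro h0
      simp [h0] at hd
    have := Measure.map_linearMap_addHaar_eq_smul_addHaar (volume : Measure (Conf N)) h0
    rw [abs_inv, hd] at this
    rw [inv_one, ENNReal.ofReal_one, one_smul] at this
    exact this

lemma average {N : ℕ} {j k : Fin N} (h : j ≠ k) (F : Conf N → ℝ) (hF : Continuous F)
    (hFc : HasCompactSupport F) :
    Integrable (fun x => ∫ t in (0:ℝ)..Real.pi, F (pairRot j k t x)) ∧
    ∫ x, (∫ t in (0:ℝ)..Real.pi, F (pairRot j k t x)) = Real.pi * ∫ x, F x := by
  have hFi : Integrable F := hF.integrable_of_hasCompactSupport hFc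
  have hcont : Continuous fun q : Conf N × ℝ => F (pairRot j k q.2 q.1) :=
    hF.comp (continuous_pairRot j k)
  have hemb : ∀ t, Continuous (pairRot j k t) := fun t =>
    (continuous_pairRot j k).comp (Continuous.prodMk_left t)
  have hconst : ∀ (g : Conf N → ℝ), Continuous g → ∀ t, ∫ x, g (pairRot j k t x) = ∫ x, g x := by
    intro g hg t
    have := (measurePreserving_pairRot h t)
    rw [← integral_map (f := g) (μ := volume) (φ := pairRot j k t) (hemb t).aemeasurable hg.aestronglyMeasurable,
      this.map_eq]
  have hint : Integrable (fun q : Conf N × ℝ => F (pairRot j k q.2 q.1))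
      (volume.prod (volume.restrict (Set.Ioc 0 Real.pi))) := by
    rw [integrable_prod_iff' hcont.aestronglyMeasurable]
    refine ⟨Filter.Eventually.of_forall fun t => ?_, ?_⟩
    · exact (measurePreserving_pairRot h t).integrable_comp_of_integrable hFi
    · simp only
      simp_rw [fun t => hconst (fun x => ‖F x‖) hF.norm t]
      exact integrable_const _
  simp only [intervalIntegral.integral_of_le Real.pi_pos.le]
  refine ⟨hint.integral_prod_left, ?_⟩
  rw [integral_integral_swap hint]
  simp_rw [hconst F hF]
  simp [Real.pi_pos.le]

/-- complexification of a planar vector -/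
def toC (v : Fin 2 → ℝ) : ℂ := ⟨v 0, v 1⟩

lemma toC_normSq (v : Fin 2 → ℝ) : Complex.normSq (toC v) = normSq2 v := by
  simp [toC, Complex.normSq_apply, normSq2]
  ring

lemma toC_norm_sq (v : Fin 2 → ℝ) : ‖toC v‖ ^ 2 = normSq2 v := by
  rw [Complex.sq_norm, toC_normSq]

lemma toC_rot2 (t : ℝ) (v : Fin 2 → ℝ) :
    toC (rot2 t v) = toC v * Complex.exp (t * Complex.I) := by
  apply Complex.ext
  · simp [toC, rot2, Complex.exp_ofReal_mul_I_re, Complex.exp_ofReal_mul_I_im]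
    ring
  · simp [toC, rot2, Complex.exp_ofReal_mul_I_re, Complex.exp_ofReal_mul_I_im]
    ring

lemma perp_dot (r v : Fin 2 → ℝ) :
    ∑ p : Fin 2, perp2 r p * (perp2 v p / normSq2 v) = (toC r / toC v).re := by
  rw [Complex.div_re, toC_normSq]
  simp [Fin.sum_univ_two, perp2, toC]
  ring

lemma toC_add (v w : Fin 2 → ℝ) : toC (v + w) = toC v + toC w := by
  apply Complex.ext <;> simp [toC]
lemma toC_sub (v w : Fin 2 → ℝ) : toC (v - w) = toC v - toC w := by
  apply Complex.ext <;> simp [toC]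
lemma toC_neg (v : Fin 2 → ℝ) : toC (-v) = -toC v := by
  apply Complex.ext <;> simp [toC]
lemma toC_ne_zero {v : Fin 2 → ℝ} (h : v ≠ 0) : toC v ≠ 0 := by
  intro h0
  have := normSq2_pos h
  rw [← toC_norm_sq, h0] at this
  simp at this

/-- the coordinate of particle `l` relative to the centre of mass of the pair -/
def rely {N : ℕ} (j k l : Fin N) (x : Conf N) : Fin 2 → ℝ := x l - (1 / 2 : ℝ) • (x j + x k)

/-- the angular component of the relative vector potential -/
def angA (N : ℕ) (α : ℝ) (j k : Fin N) (x : Conf N) : ℝ :=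
  ∑ p : Fin 2, perp2 (relv j k x) p * (abPotential N α j p x - abPotential N α k p x)

lemma dot_abPotential (N : ℕ) (α : ℝ) (j : Fin N) (r : Fin 2 → ℝ) (x : Conf N) :
    ∑ p : Fin 2, perp2 r p * abPotential N α j p x =
      α * ∑ l ∈ Finset.univ.erase j, (toC r / toC (x j - x l)).re := by
  simp only [← perp_dot, abPotential, Finset.mul_sum]
  rw [Finset.sum_comm]
  refine Finset.sum_congr rfl fun l _ => Finset.sum_congr rfl fun p _ => ?_
  ring

lemma angA_eq (N : ℕ) (α : ℝ) {j k : Fin N} (h : j ≠ k) (x : Conf N) (hx : x j ≠ x k) :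
    angA N α j k x = α * (1 + ∑ l ∈ (Finset.univ.erase j).erase k,
      (toC (relv j k x) / (toC (relv j k x) - toC (rely j k l x))
        + toC (relv j k x) / (toC (relv j k x) + toC (rely j k l x))).re) := by
  have hr : relv j k x ≠ 0 := by
    rw [relv]
    exact smul_ne_zero (by norm_num) (sub_ne_zero.2 hx)
  have hr' := toC_ne_zero hr
  have e1 : x j - x k = relv j k x + relv j k x := by
    ext p; simp [relv]; ring
  have e2 : x k - x j = -(relv j k x + relv j k x) := by
    rw [← e1]; simp
  have e3 : ∀ l, x j - x l = relv j k x - rely j k l x := by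
    intro l; ext p; simp [relv, rely]; ring
  have e4 : ∀ l, x k - x l = -(relv j k x + rely j k l x) := by
    intro l; ext p; simp [relv, rely]; ring
  simp only [angA, mul_sub, Finset.sum_sub_distrib, dot_abPotential]
  rw [← Finset.add_sum_erase (Finset.univ.erase j) _ (Finset.mem_erase.2 ⟨h.symm, Finset.mem_univ k⟩),
    ← Finset.add_sum_erase (Finset.univ.erase k) _ (Finset.mem_erase.2 ⟨h, Finset.mem_univ j⟩),
    Finset.erase_right_comm (a := k) (b := j), e1, e2]
  simp only [e3, e4, toC_neg, toC_add, toC_sub, div_neg, Complex.neg_re, Finset.sum_neg_distrib,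
    Complex.add_re, Finset.sum_add_distrib]
  have : toC (relv j k x) / (toC (relv j k x) + toC (relv j k x)) = 1 / 2 := by
    field_simp
    norm_num
  rw [this]
  norm_num
  ring

/-- configurations for which no particle hits the circle through `x j, x k`. -/
def Good {N : ℕ} (j k : Fin N) (x : Conf N) : Prop :=
  x j ≠ x k ∧ ∀ l, l ≠ j → l ≠ k → normSq2 (rely j k l x) ≠ normSq2 (relv j k x)

lemma rely_pairRot {N : ℕ} {j k l : Fin N} (h : j ≠ k) (hj : l ≠ j) (hk : l ≠ k) (t : ℝ) (x : Conf N) :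
    rely j k l (pairRot j k t x) = rely j k l x := by
  rw [rely, pairRot_j h, pairRot_k h, pairRot_l hj hk, rely]
  ext p
  simp
  ring

lemma normSq_sub_pairRot {N : ℕ} {j k : Fin N} (h : j ≠ k) (t : ℝ) (x : Conf N) :
    normSq2 (pairRot j k t x j - pairRot j k t x k) = normSq2 (x j - x k) := by
  rw [sub_pairRot h, normSq2_smul, normSq2_rot2, relv, normSq2_smul]
  ring

lemma pairRot_ne {N : ℕ} {j k : Fin N} (h : j ≠ k) (t : ℝ) (x : Conf N) (hx : x j ≠ x k) :
    pairRot j k t x j ≠ pairRot j k t x k := by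
  intro h0
  have h1 := normSq_sub_pairRot h t x
  have h2 := normSq2_pos (sub_ne_zero.2 hx)
  rw [← h1, h0] at h2
  simp [normSq2] at h2

lemma angA_pairRot (N : ℕ) (α : ℝ) {j k : Fin N} (h : j ≠ k) (x : Conf N) (hx : x j ≠ x k) (t : ℝ) :
    angA N α j k (pairRot j k t x) = α * (1 + ∑ l ∈ (Finset.univ.erase j).erase k,
      ((toC (relv j k x) * Complex.exp (t * Complex.I)) /
          (toC (relv j k x) * Complex.exp (t * Complex.I) - toC (rely j k l x))
        + (toC (relv j k x) * Complex.exp (t * Complex.I)) /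
          (toC (relv j k x) * Complex.exp (t * Complex.I) + toC (rely j k l x))).re) := by
  rw [angA_eq N α h _ (pairRot_ne h t x hx), relv_pairRot h, toC_rot2]
  congr 2
  refine Finset.sum_congr rfl fun l hl => ?_
  simp only [Finset.mem_erase, Finset.mem_univ, and_true] at hl
  rw [rely_pairRot h hl.2 hl.1]

lemma good_ne {N : ℕ} {j k : Fin N} {x : Conf N} (hx : Good j k x) {l : Fin N} (hj : l ≠ j) (hk : l ≠ k) :
    ‖toC (rely j k l x)‖ ≠ ‖toC (relv j k x)‖ := by
  intro h0
  apply hx.2 l hj hk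
  rw [← toC_norm_sq, ← toC_norm_sq, h0]

lemma relv_ne {N : ℕ} {j k : Fin N} {x : Conf N} (hx : x j ≠ x k) : relv j k x ≠ 0 := by
  rw [relv]
  exact smul_ne_zero (by norm_num) (sub_ne_zero.2 hx)

lemma cont_term (r y : ℂ) (hy : ‖y‖ ≠ ‖r‖) :
    Continuous fun t : ℝ => ((r * Complex.exp (t * Complex.I)) / (r * Complex.exp (t * Complex.I) - y)
        + (r * Complex.exp (t * Complex.I)) / (r * Complex.exp (t * Complex.I) + y)).re := by
  have hne1 : ∀ t : ℝ, r * Complex.exp (t * Complex.I) - y ≠ 0 := by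
    intro t h0
    apply hy
    rw [← sub_eq_zero.1 h0, norm_mul, Complex.norm_exp_ofReal_mul_I, mul_one]
  have hne2 : ∀ t : ℝ, r * Complex.exp (t * Complex.I) + y ≠ 0 := by
    intro t h0
    apply hy
    rw [← norm_neg y, ← eq_neg_of_add_eq_zero_left h0, norm_mul, Complex.norm_exp_ofReal_mul_I,
      mul_one]
  apply Complex.continuous_re.comp
  exact (Continuous.div (by fun_prop) (by fun_prop) hne1).add
    (Continuous.div (by fun_prop) (by fun_prop) hne2)

lemma continuous_angA (N : ℕ) (α : ℝ) {j k : Fin N} (h : j ≠ k) (x : Conf N) (hx : Good j k x) :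
    Continuous fun t => angA N α j k (pairRot j k t x) := by
  simp_rw [angA_pairRot N α h x hx.1]
  refine continuous_const.mul (continuous_const.add (continuous_finsetSum _ fun l hl => ?_))
  simp only [Finset.mem_erase, Finset.mem_univ, and_true] at hl
  exact cont_term _ _ (good_ne hx hl.2 hl.1)

lemma integral_angA (N : ℕ) (α : ℝ) {j k : Fin N} (h : j ≠ k) (x : Conf N) (hx : Good j k x) :
    ∃ p : ℕ, p ≤ N - 2 ∧ ∫ t in (0:ℝ)..Real.pi, angA N α j k (pairRot j k t x) =
      Real.pi * ((2 * p + 1) * α) := by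
  refine ⟨(((Finset.univ.erase j).erase k).filter
    (fun l => ‖toC (rely j k l x)‖ < ‖toC (relv j k x)‖)).card, ?_, ?_⟩
  · refine (Finset.card_filter_le _ _).trans ?_
    rw [Finset.card_erase_of_mem (Finset.mem_erase.2 ⟨h.symm, Finset.mem_univ k⟩),
      Finset.card_erase_of_mem (Finset.mem_univ j), Finset.card_univ, Fintype.card_fin]
    omega
  · have hcont : ∀ l ∈ (Finset.univ.erase j).erase k, Continuous fun t : ℝ =>
      ((toC (relv j k x) * Complex.exp (t * Complex.I)) /
          (toC (relv j k x) * Complex.exp (t * Complex.I) - toC (rely j k l x))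
        + (toC (relv j k x) * Complex.exp (t * Complex.I)) /
          (toC (relv j k x) * Complex.exp (t * Complex.I) + toC (rely j k l x))).re := by
      intro l hl
      simp only [Finset.mem_erase, Finset.mem_univ, and_true] at hl
      exact cont_term _ _ (good_ne hx hl.2 hl.1)
    simp_rw [angA_pairRot N α h x hx.1]
    rw [intervalIntegral.integral_const_mul, intervalIntegral.integral_add,
      intervalIntegral.integral_finsetSum]
    · have : ∀ l ∈ (Finset.univ.erase j).erase k, ∫ t in (0:ℝ)..Real.pi,
        ((toC (relv j k x) * Complex.exp (t * Complex.I)) /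
          (toC (relv j k x) * Complex.exp (t * Complex.I) - toC (rely j k l x))
        + (toC (relv j k x) * Complex.exp (t * Complex.I)) /
          (toC (relv j k x) * Complex.exp (t * Complex.I) + toC (rely j k l x))).re =
          if ‖toC (rely j k l x)‖ < ‖toC (relv j k x)‖ then 2 * Real.pi else 0 := by
        intro l hl
        simp only [Finset.mem_erase, Finset.mem_univ, and_true] at hl
        exact winding_half _ _ (toC_ne_zero (relv_ne hx.1)) (good_ne hx hl.2 hl.1)
      rw [Finset.sum_congr rfl this, ← Finset.sum_filter, Finset.sum_const]
      simp
      ring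
    · intro l hl
      exact (hcont l hl).intervalIntegrable _ _
    · exact continuous_const.intervalIntegrable _ _
    · exact (continuous_finsetSum _ hcont).intervalIntegrable _ _

lemma ae_quad {N : ℕ} (f : Conf N → ℝ) (hf : Continuous f) (v : Conf N) (b : Conf N → ℝ)
    (c : ℝ) (hc : c ≠ 0) (hq : ∀ x t, f (x + t • v) = c * t ^ 2 + b x * t + f x) :
    ∀ᵐ x : Conf N, f x ≠ 0 := by
  have hs : MeasurableSet {x : Conf N | f x ≠ 0} := (isOpen_ne_fun hf continuous_const).measurableSet
  refine ae_mem_of_ae_add_linearMap_mem (LinearMap.toSpanSingleton ℝ (Conf N) v) volume volume hs ?_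
  intro y
  have hfin : Set.Finite {t : ℝ | f (y + t • v) = 0} := by
    set P : Polynomial ℝ := Polynomial.C c * Polynomial.X ^ 2 + Polynomial.C (b y) * Polynomial.X
      + Polynomial.C (f y) with hP
    have hP0 : P ≠ 0 := by
      intro h0
      have := congrArg (fun q => Polynomial.coeff q 2) h0
      simp [hP] at this
      exact hc this
    refine (P.roots.toFinset.finite_toSet).subset ?_
    intro t ht
    replace ht : f (y + t • v) = 0 := ht
    rw [hq] at ht
    have hroot : P.IsRoot t := by simp [hP, ht]
    simp only [Finset.mem_coe, Multiset.mem_toFinset]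
    exact (Polynomial.mem_roots hP0).2 hroot
  have := (hfin.countable).ae_notMem volume
  filter_upwards [this] with t ht
  have h2 : ¬ f (y + t • v) = 0 := ht
  exact h2

lemma ae_good {N : ℕ} {j k : Fin N} (h : j ≠ k) : ∀ᵐ x : Conf N, Good j k x := by
  have h1 : ∀ᵐ x : Conf N, normSq2 (x j - x k) ≠ 0 := by
    refine ae_quad _ (by unfold normSq2; fun_prop) (Pi.single j (Pi.single 0 1))
      (fun x => 2 * (x j 0 - x k 0)) 1 one_ne_zero ?_
    intro x t
    simp [normSq2, h.symm]
    ring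
  have h2 : ∀ᵐ x : Conf N, ∀ l, l ≠ j → l ≠ k →
      normSq2 (rely j k l x) - normSq2 (relv j k x) ≠ 0 := by
    rw [ae_all_iff]
    intro l
    by_cases hj : l = j
    · simp [hj]
    by_cases hk : l = k
    · simp [hk]
    have : ∀ᵐ x : Conf N, normSq2 (rely j k l x) - normSq2 (relv j k x) ≠ 0 := by
      refine ae_quad _ (by unfold normSq2 rely relv; simp; fun_prop) (Pi.single l (Pi.single 0 1))
        (fun x => 2 * (rely j k l x 0)) 1 one_ne_zero ?_
      intro x t
      simp [normSq2, rely, relv, Ne.symm hj, Ne.symm hk]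
      ring
    filter_upwards [this] with x hx _ _
    exact hx
  filter_upwards [h1, h2] with x hx1 hx2
  refine ⟨?_, fun l hj hk => sub_ne_zero.1 (hx2 l hj hk)⟩
  intro h0
  apply hx1
  simp [h0, normSq2]

/-- the covariant derivative -/
def covD (N : ℕ) (α : ℝ) (Φ : Conf N → ℂ) (j : Fin N) (p : Fin 2) (x : Conf N) : ℂ :=
  (-Complex.I) * fderiv ℝ Φ x (Pi.single j (Pi.single p 1)) + (abPotential N α j p x : ℂ) * Φ x

lemma isOpen_compl_diag (N : ℕ) : IsOpen (fatDiagonal N)ᶜ := by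
  have : (fatDiagonal N)ᶜ = ⋂ j : Fin N, ⋂ k : Fin N, {x : Conf N | j ≠ k → x j ≠ x k} := by
    ext x
    simp [fatDiagonal]
  rw [this]
  refine isOpen_iInter_of_finite fun j => isOpen_iInter_of_finite fun k => ?_
  by_cases h : j = k
  · simp [h]
  · simp only [ne_eq, h, not_false_eq_true, forall_const]
    exact isOpen_ne_fun (continuous_apply j) (continuous_apply k)

lemma cont_mul_of_off {N : ℕ} {Φ : Conf N → ℂ} (hΦ : Continuous Φ)
    (hdiag : ∀ x ∈ fatDiagonal N, x ∉ tsupport Φ) (g : Conf N → ℂ)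
    (hg : ContinuousOn g (fatDiagonal N)ᶜ) : Continuous fun x => g x * Φ x := by
  rw [continuous_iff_continuousAt]
  intro x
  by_cases hx : x ∈ fatDiagonal N
  · have h1 : ∀ᶠ y in nhds x, Φ y = 0 := by
      have := (notMem_tsupport_iff_eventuallyEq.1 (hdiag x hx))
      filter_upwards [this] with y hy using hy
    have h2 : (fun y => g y * Φ y) =ᶠ[nhds x] fun _ => 0 := by
      filter_upwards [h1] with y hy
      simp [hy]
    exact continuousAt_const.congr h2.symm
  · exact ((hg.continuousAt ((isOpen_compl_diag N).mem_nhds hx))).mul hΦ.continuousAt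

lemma continuous_normSq2 : Continuous normSq2 := by
  unfold normSq2
  fun_prop

lemma continuousOn_abPotential (N : ℕ) (α : ℝ) (j : Fin N) (p : Fin 2) :
    ContinuousOn (abPotential N α j p) (fatDiagonal N)ᶜ := by
  unfold abPotential
  refine continuousOn_const.mul (continuousOn_finsetSum _ fun l hl => ?_)
  refine ContinuousOn.div ?_ ?_ ?_
  · apply Continuous.continuousOn
    unfold perp2
    fin_cases p <;> simp <;> fun_prop
  · exact (continuous_normSq2.comp (by fun_prop)).continuousOn
  · intro x hx
    apply ne_of_gt
    apply normSq2_pos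
    rw [sub_ne_zero]
    intro h
    exact hx ⟨j, l, (Finset.mem_erase.1 hl).1.symm, h⟩

lemma continuous_covD {N : ℕ} (α : ℝ) {Φ : Conf N → ℂ} (hs : ContDiff ℝ (⊤ : ℕ∞) Φ)
    (hdiag : ∀ x ∈ fatDiagonal N, x ∉ tsupport Φ) (j : Fin N) (p : Fin 2) :
    Continuous (covD N α Φ j p) := by
  unfold covD
  refine Continuous.add ?_ ?_
  · exact continuous_const.mul ((hs.continuous_fderiv (by simp)).clm_apply continuous_const)
  · exact cont_mul_of_off hs.continuous hdiag _
      (Complex.continuous_ofReal.comp_continuousOn (continuousOn_abPotential N α j p))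

lemma hasCompactSupport_covD {N : ℕ} (α : ℝ) {Φ : Conf N → ℂ} (hcs : HasCompactSupport Φ)
    (j : Fin N) (p : Fin 2) :
    HasCompactSupport (covD N α Φ j p) := by
  unfold covD
  refine HasCompactSupport.add ?_ ?_
  · exact (hcs.fderiv_apply (𝕜 := ℝ) _).mul_left
  · exact hcs.mul_left

lemma continuous_hardyTerm {N : ℕ} {Φ : Conf N → ℂ} (hs : Continuous Φ)
    (hdiag : ∀ x ∈ fatDiagonal N, x ∉ tsupport Φ) {j k : Fin N} (h : j ≠ k) :
    Continuous fun x : Conf N => ‖Φ x‖ ^ 2 / normSq2 (x j - x k) := by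
  have h1 : Continuous fun x : Conf N => (((normSq2 (x j - x k))⁻¹ : ℝ) : ℂ) * Φ x := by
    apply cont_mul_of_off hs hdiag
    refine Complex.continuous_ofReal.comp_continuousOn (ContinuousOn.inv₀
      (continuous_normSq2.comp (by fun_prop)).continuousOn ?_)
    intro x hx
    apply ne_of_gt
    apply normSq2_pos
    rw [sub_ne_zero]
    intro h'
    exact hx ⟨j, k, h, h'⟩
  have h2 : (fun x : Conf N => ‖Φ x‖ ^ 2 / normSq2 (x j - x k)) =
      fun x => ‖Φ x‖ * ‖(((normSq2 (x j - x k))⁻¹ : ℝ) : ℂ) * Φ x‖ := by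
    ext x
    have : 0 ≤ normSq2 (x j - x k) := by unfold normSq2; positivity
    rw [norm_mul, Complex.norm_real, norm_inv, Real.norm_of_nonneg this]
    ring
  rw [h2]
  exact hs.norm.mul h1.norm

lemma hasCompactSupport_hardyTerm {N : ℕ} {Φ : Conf N → ℂ} (hcs : HasCompactSupport Φ) (j k : Fin N) :
    HasCompactSupport fun x : Conf N => ‖Φ x‖ ^ 2 / normSq2 (x j - x k) := by
  refine hcs.mono ?_
  intro x hx hx'
  apply hx
  simp [hx']

lemma fractionality_le {N : ℕ} (α : ℝ) (p : ℕ) (hp : p ≤ N - 2) (q : ℤ) :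
    fractionality N α ≤ |(2 * (p : ℝ) + 1) * α + 2 * q| := by
  refine csInf_le ⟨0, ?_⟩ ⟨p, hp, -q, ?_⟩
  · rintro t ⟨p, _, q, rfl⟩
    exact abs_nonneg _
  · push_cast
    congr 1
    ring

lemma fractionality_nonneg (N : ℕ) (α : ℝ) : 0 ≤ fractionality N α := by
  refine Real.sInf_nonneg ?_
  rintro t ⟨p, _, q, rfl⟩
  exact abs_nonneg _

/-- angular derivative -/
lemma angular_eq (N : ℕ) (α : ℝ) (Φ : Conf N → ℂ) (j k : Fin N) (x : Conf N) :
    -Complex.I * fderiv ℝ Φ x (Pi.single j (perp2 (relv j k x)) - Pi.single k (perp2 (relv j k x)))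
      + angA N α j k x * Φ x =
    ∑ p : Fin 2, (perp2 (relv j k x) p : ℂ) * (covD N α Φ j p x - covD N α Φ k p x) := by
  have hv : ∀ (v : Fin 2 → ℝ) (i : Fin N), (Pi.single i v : Conf N) =
      v 0 • (Pi.single i (Pi.single 0 1) : Conf N) + v 1 • (Pi.single i (Pi.single 1 1) : Conf N) := by
    intro v i
    ext l p
    by_cases hl : l = i
    · subst hl
      fin_cases p <;> simp
    · simp [hl]
  rw [hv _ j, hv _ k]
  simp only [map_sub, map_add, map_smul, angA, covD, Fin.sum_univ_two, Complex.real_smul]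
  push_cast
  ring

lemma cauchy2 (v : Fin 2 → ℝ) (d : Fin 2 → ℂ) :
    ‖∑ p : Fin 2, (v p : ℂ) * d p‖ ^ 2 ≤ normSq2 v * ∑ p : Fin 2, ‖d p‖ ^ 2 := by
  simp only [Fin.sum_univ_two, normSq2]
  have h1 : ‖(v 0 : ℂ) * d 0 + (v 1 : ℂ) * d 1‖ ≤ |v 0| * ‖d 0‖ + |v 1| * ‖d 1‖ := by
    refine (norm_add_le _ _).trans ?_
    simp
  have h2 := pow_le_pow_left₀ (norm_nonneg _) h1 2
  have h3 := sq_abs (v 0)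
  have h4 := sq_abs (v 1)
  rw [← h3, ← h4]
  nlinarith [sq_nonneg (|v 0| * ‖d 1‖ - |v 1| * ‖d 0‖)]

lemma inner_ineq {N : ℕ} (α : ℝ) {Φ : Conf N → ℂ} (hs : ContDiff ℝ (⊤ : ℕ∞) Φ)
    (hdiag : ∀ x ∈ fatDiagonal N, x ∉ tsupport Φ)
    (hsym : ∀ (σ : Equiv.Perm (Fin N)) (x : Conf N), Φ (x ∘ σ) = Φ x)
    {j k : Fin N} (h : j ≠ k) (x : Conf N) (hx : Good j k x) :
    4 * fractionality N α ^ 2 * (∫ t in (0:ℝ)..Real.pi,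
      ‖Φ (pairRot j k t x)‖ ^ 2 / normSq2 (pairRot j k t x j - pairRot j k t x k)) ≤
    ∫ t in (0:ℝ)..Real.pi, ∑ p : Fin 2,
      ‖covD N α Φ j p (pairRot j k t x) - covD N α Φ k p (pairRot j k t x)‖ ^ 2 := by
  obtain ⟨p, hp, hint⟩ := integral_angA N α h x hx
  have hrot : Continuous fun t => pairRot j k t x :=
    (continuous_pairRot j k).comp (Continuous.prodMk_right x)
  have hrelc : Continuous fun t => perp2 (rot2 t (relv j k x)) := by
    refine continuous_pi fun p => ?_
    fin_cases p <;> simp [perp2, rot2] <;> fun_prop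
  have hsing : ∀ i : Fin N, Continuous fun t => (Pi.single i (perp2 (rot2 t (relv j k x))) : Conf N) :=
    fun i => (continuous_single (A := fun _ : Fin N => Fin 2 → ℝ) i).comp hrelc
  have hu : ∀ t, HasDerivAt (fun t => Φ (pairRot j k t x))
      (fderiv ℝ Φ (pairRot j k t x) (Pi.single j (perp2 (rot2 t (relv j k x)))
        - Pi.single k (perp2 (rot2 t (relv j k x))))) t := fun t =>
    ((hs.differentiable (by simp)) _).hasFDerivAt.comp_hasDerivAt t (hasDerivAt_pairRot j k x t)
  have key := circle_hardy (fun t => Φ (pairRot j k t x)) _ (fun t => angA N α j k (pairRot j k t x))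
    hu (((hs.continuous_fderiv (by simp)).comp hrot).clm_apply ((hsing j).sub (hsing k)))
    (continuous_angA N α h x hx) (by simp only [pairRot_pi h, pairRot_zero, hsym])
    ((2 * p + 1) * α) (fractionality N α) (fractionality_nonneg N α)
    (fun q => fractionality_le α p hp q) hint
  have hn : 0 < normSq2 (relv j k x) := normSq2_pos (relv_ne hx.1)
  have hn4 : normSq2 (x j - x k) = 4 * normSq2 (relv j k x) := by
    rw [relv, normSq2_smul]; ring
  simp_rw [normSq_sub_pairRot h]
  rw [intervalIntegral.integral_div, hn4]
  have hD : ∀ (i : Fin N) (p : Fin 2), Continuous fun t => covD N α Φ i p (pairRot j k t x) :=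
    fun i p => (continuous_covD α hs hdiag i p).comp hrot
  have hc1 : Continuous fun t => ∑ p : Fin 2,
      ‖covD N α Φ j p (pairRot j k t x) - covD N α Φ k p (pairRot j k t x)‖ ^ 2 :=
    continuous_finsetSum _ fun p _ => (((hD j p).sub (hD k p)).norm.pow 2)
  have hle : ∫ t in (0:ℝ)..Real.pi, ‖-Complex.I * fderiv ℝ Φ (pairRot j k t x)
        (Pi.single j (perp2 (rot2 t (relv j k x))) - Pi.single k (perp2 (rot2 t (relv j k x))))
        + angA N α j k (pairRot j k t x) * Φ (pairRot j k t x)‖ ^ 2 ≤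
      normSq2 (relv j k x) * ∫ t in (0:ℝ)..Real.pi, ∑ p : Fin 2,
      ‖covD N α Φ j p (pairRot j k t x) - covD N α Φ k p (pairRot j k t x)‖ ^ 2 := by
    rw [← intervalIntegral.integral_const_mul]
    refine intervalIntegral.integral_mono_on Real.pi_pos.le ?_ ?_ ?_
    · apply Continuous.intervalIntegrable
      refine Continuous.pow (Continuous.norm (Continuous.add (continuous_const.mul
        (((hs.continuous_fderiv (by simp)).comp hrot).clm_apply ((hsing j).sub (hsing k)))) ?_)) 2
      exact (Complex.continuous_ofReal.comp (continuous_angA N α h x hx)).mul (hs.continuous.comp hrot)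
    · exact (continuous_const.mul hc1).intervalIntegrable _ _
    · intro t _
      have := angular_eq N α Φ j k (pairRot j k t x)
      rw [relv_pairRot h] at this
      rw [this]
      refine (cauchy2 _ _).trans ?_
      rw [normSq2_perp2, normSq2_rot2]
  have hall := key.trans hle
  rw [show ∀ I : ℝ, 4 * fractionality N α ^ 2 * (I / (4 * normSq2 (relv j k x))) =
    (fractionality N α ^ 2 * I) / normSq2 (relv j k x) by intro I; field_simp]
  rw [div_le_iff₀ hn, mul_comm _ (normSq2 _)]
  exact hall

lemma pair_ineq {N : ℕ} (α : ℝ) {Φ : Conf N → ℂ} (hs : ContDiff ℝ (⊤ : ℕ∞) Φ)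
    (hcs : HasCompactSupport Φ)
    (hdiag : ∀ x ∈ fatDiagonal N, x ∉ tsupport Φ)
    (hsym : ∀ (σ : Equiv.Perm (Fin N)) (x : Conf N), Φ (x ∘ σ) = Φ x)
    {j k : Fin N} (h : j ≠ k) :
    Integrable (fun x : Conf N => ∑ p : Fin 2, ‖covD N α Φ j p x - covD N α Φ k p x‖ ^ 2) ∧
    4 * fractionality N α ^ 2 * (∫ x : Conf N, ‖Φ x‖ ^ 2 / normSq2 (x j - x k)) ≤
      ∫ x : Conf N, ∑ p : Fin 2, ‖covD N α Φ j p x - covD N α Φ k p x‖ ^ 2 := by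
  have hGc : Continuous fun x : Conf N => ∑ p : Fin 2, ‖covD N α Φ j p x - covD N α Φ k p x‖ ^ 2 :=
    continuous_finsetSum _ fun p _ =>
      ((continuous_covD α hs hdiag j p).sub (continuous_covD α hs hdiag k p)).norm.pow 2
  have hcomp : ∀ p, HasCompactSupport fun x : Conf N => ‖covD N α Φ j p x - covD N α Φ k p x‖ ^ 2 := by
    intro p
    have := (hasCompactSupport_covD α hcs j p).sub (hasCompactSupport_covD α hcs k p)
    refine this.mono ?_
    intro x hx hx'
    apply hx
    have h' : covD N α Φ j p x - covD N α Φ k p x = 0 := hx'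
    simp [h']
  have hGs : HasCompactSupport fun x : Conf N =>
      ∑ p : Fin 2, ‖covD N α Φ j p x - covD N α Φ k p x‖ ^ 2 := by
    simp only [Fin.sum_univ_two]
    exact (hcomp 0).add (hcomp 1)
  refine ⟨hGc.integrable_of_hasCompactSupport hGs, ?_⟩
  obtain ⟨i1, e1⟩ := average h _ hGc hGs
  obtain ⟨i2, e2⟩ := average h _ (continuous_hardyTerm hs.continuous hdiag h)
    (hasCompactSupport_hardyTerm hcs j k)
  have hmono := integral_mono_ae (i2.const_mul (4 * fractionality N α ^ 2)) i1
    ((ae_good h).mono fun x hx => inner_ineq α hs hdiag hsym h x hx)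
  rw [integral_const_mul, e1, e2] at hmono
  have hπ := Real.pi_pos
  rw [show ∀ I : ℝ, 4 * fractionality N α ^ 2 * (Real.pi * I) =
    Real.pi * (4 * fractionality N α ^ 2 * I) by intro I; ring] at hmono
  exact le_of_mul_le_mul_left hmono hπ

lemma sum_pairs {N : ℕ} (f : Fin N → Fin N → ℝ) (hs : ∀ j k, f j k = f k j) (h0 : ∀ j, f j j = 0) :
    ∑ j, ∑ k, f j k = 2 * ∑ j : Fin N, ∑ k ∈ Finset.Ioi j, f j k := by
  have hsplit : ∀ j : Fin N, ∑ k, f j k = ∑ k ∈ Finset.Ioi j, f j k + ∑ k ∈ Finset.Iio j, f j k := by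
    intro j
    have : ∀ k, f j k = (if j < k then f j k else 0) + (if k < j then f j k else 0) := by
      intro k
      rcases lt_trichotomy j k with hl | hl | hl
      · simp [hl, hl.not_gt]
      · subst hl; simp [h0]
      · simp [hl, hl.not_gt]
    rw [Finset.sum_congr rfl fun k _ => this k, Finset.sum_add_distrib, ← Finset.sum_filter,
      ← Finset.sum_filter]
    congr 2
    · ext k; simp
    · ext k; simp
  rw [Finset.sum_congr rfl fun j _ => hsplit j, Finset.sum_add_distrib]
  have : ∑ j : Fin N, ∑ k ∈ Finset.Iio j, f j k = ∑ j : Fin N, ∑ k ∈ Finset.Ioi j, f j k := by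
    rw [Finset.sum_comm' (t' := Finset.univ) (s' := fun k => Finset.Ioi k) (by simp)]
    exact Finset.sum_congr rfl fun j _ => Finset.sum_congr rfl fun k _ => hs _ _
  rw [this]
  ring

lemma parallelogram {N : ℕ} (d : Fin N → ℂ) :
    ∑ j : Fin N, ∑ k ∈ Finset.Ioi j, ‖d j - d k‖ ^ 2 ≤ N * ∑ j, ‖d j‖ ^ 2 := by
  have h1 := sum_pairs (fun j k => ‖d j - d k‖ ^ 2) (fun j k => by rw [norm_sub_rev]) (by simp)
  have h2 : ∀ a b : ℂ, ‖a - b‖ ^ 2 = ‖a‖ ^ 2 + ‖b‖ ^ 2 - 2 * (a.re * b.re + a.im * b.im) := by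
    intro a b
    simp only [Complex.sq_norm, Complex.normSq_apply, Complex.sub_re, Complex.sub_im]
    ring
  have h3 : ∑ j, ∑ k, ‖d j - d k‖ ^ 2 =
      2 * (N * ∑ j, ‖d j‖ ^ 2) - 2 * ((∑ j, (d j).re) ^ 2 + (∑ j, (d j).im) ^ 2) := by
    simp only [h2, Finset.sum_sub_distrib, Finset.sum_add_distrib, ← Finset.mul_sum,
      sq (∑ j, _), Finset.sum_mul, Finset.sum_const, Finset.card_univ, Fintype.card_fin, nsmul_eq_mul]
    ring
  rw [h3] at h1
  nlinarith [sq_nonneg (∑ j, (d j).re), sq_nonneg (∑ j, (d j).im)]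

/-- **Many-anyon Hardy inequality (abelian magnetic gauge).**
For every smooth symmetric `Φ` compactly supported away from the fat diagonal,
`∫ ∑_j ‖(−i∇_j + A_j^α)Φ‖² ≥ (4α_N²/N) ∑_{j<k} ∫ |Φ|²/|x_j − x_k|²`. -/
theorem hardy_abelian_anyons (N : ℕ) (hN : 2 ≤ N) (α : ℝ)
    (Φ : (Fin N → Fin 2 → ℝ) → ℂ)
    (hsmooth : ContDiff ℝ (⊤ : ℕ∞) Φ) (hcs : HasCompactSupport Φ)
    (hdiag : ∀ x ∈ fatDiagonal N, x ∉ tsupport Φ)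
    (hsym : ∀ (σ : Equiv.Perm (Fin N)) (x : Fin N → Fin 2 → ℝ), Φ (x ∘ σ) = Φ x) :
    4 * fractionality N α ^ 2 / N *
        ∑ j : Fin N, ∑ k ∈ Finset.Ioi j,
          ∫ x : Fin N → Fin 2 → ℝ, ‖Φ x‖ ^ 2 / normSq2 (x j - x k) ≤
      ∫ x : Fin N → Fin 2 → ℝ, ∑ j : Fin N, ∑ p : Fin 2,
        ‖(-Complex.I) * fderiv ℝ Φ x (Pi.single j (Pi.single p 1)) +
          (abPotential N α j p x : ℂ) * Φ x‖ ^ 2 := by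
  change _ ≤ ∫ x : Conf N, ∑ j : Fin N, ∑ p : Fin 2, ‖covD N α Φ j p x‖ ^ 2
  have hNpos : (0:ℝ) < N := by
    have : 0 < N := by omega
    exact_mod_cast this
  rw [div_mul_eq_mul_div, div_le_iff₀ hNpos]
  have hpair : ∀ j k : Fin N, k ∈ Finset.Ioi j → _ := fun j k hk =>
    pair_ineq α hsmooth hcs hdiag hsym (Finset.mem_Ioi.1 hk).ne
  have hint : Integrable fun x : Conf N => ∑ j : Fin N, ∑ p : Fin 2, ‖covD N α Φ j p x‖ ^ 2 := by
    refine integrable_finsetSum _ fun j _ => integrable_finsetSum _ fun p _ => ?_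
    have hc := continuous_covD α hsmooth hdiag j p
    refine (hc.norm.pow 2).integrable_of_hasCompactSupport ?_
    refine (hasCompactSupport_covD α hcs j p).mono ?_
    intro x hx hx'
    apply hx
    simp [hx']
  calc 4 * fractionality N α ^ 2 * ∑ j : Fin N, ∑ k ∈ Finset.Ioi j,
          ∫ x : Conf N, ‖Φ x‖ ^ 2 / normSq2 (x j - x k)
      = ∑ j : Fin N, ∑ k ∈ Finset.Ioi j, 4 * fractionality N α ^ 2 *
          ∫ x : Conf N, ‖Φ x‖ ^ 2 / normSq2 (x j - x k) := by
        simp only [Finset.mul_sum]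
    _ ≤ ∑ j : Fin N, ∑ k ∈ Finset.Ioi j, ∫ x : Conf N, ∑ p : Fin 2,
          ‖covD N α Φ j p x - covD N α Φ k p x‖ ^ 2 :=
        Finset.sum_le_sum fun j _ => Finset.sum_le_sum fun k hk => (hpair j k hk).2
    _ = ∫ x : Conf N, ∑ j : Fin N, ∑ k ∈ Finset.Ioi j, ∑ p : Fin 2,
          ‖covD N α Φ j p x - covD N α Φ k p x‖ ^ 2 := by
        rw [integral_finsetSum _ fun j _ => integrable_finsetSum _ fun k hk => (hpair j k hk).1]
        exact Finset.sum_congr rfl fun j _ => (integral_finsetSum _ fun k hk => (hpair j k hk).1).symm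
    _ ≤ ∫ x : Conf N, (∑ j : Fin N, ∑ p : Fin 2, ‖covD N α Φ j p x‖ ^ 2) * N := by
        refine integral_mono (integrable_finsetSum _ fun j _ =>
          integrable_finsetSum _ fun k hk => (hpair j k hk).1) (hint.mul_const _) fun x => ?_
        have h0 := parallelogram fun j => covD N α Φ j 0 x
        have h1 := parallelogram fun j => covD N α Φ j 1 x
        simp only [Fin.sum_univ_two, Finset.sum_add_distrib]
        linarith
    _ = (∫ x : Conf N, ∑ j : Fin N, ∑ p : Fin 2, ‖covD N α Φ j p x‖ ^ 2) * N := by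
        rw [integral_mul_const]
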